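/- Assume the WENO weight setup with f of class C^∞ on a neighborhood of z having a critical point of exact order k at z with 0 ≤ k ≤ R−2, and assume that either R ≥ 5, or k is even, or c_j + c_{j+1} ≠ 0 for every 0 ≤ j ≤ R−2. Then for every ε > 0 and h > 0 the global weight satisfies 0 ≤ ω_{R,h} ≤ 1, and there exist C > 0 and h₀ > 0 such that for every ε > 0 and every 0 < h < h₀: 0 ≤ 1 − ω_{R,h} ≤ C·h^{2s(R−2−k)}. -/

import Mathlib

/-- Simple smoothness indicator `I_{R,i,h}` on the nonuniform stencil `x_{i,h} = z + cᵢ h`,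
with `r = ⌊(R-1)/2⌋`. -/
noncomputable def wenoI (R : ℕ) (c : ℕ → ℝ) (z : ℝ) (f : ℝ → ℝ) (i : ℕ) (h : ℝ) : ℝ :=
  ∑ j ∈ Finset.Ico i (i + (R - 1) / 2),
    ((f (z + c (j + 1) * h) - f (z + c j * h)) / (c (j + 1) - c j)) ^ 2

/-- Squared undivided difference `d_{R,h}` of `f` on the full stencil. -/
noncomputable def wenoD (R : ℕ) (c : ℕ → ℝ) (z : ℝ) (f : ℝ → ℝ) (h : ℝ) : ℝ :=
  (((R - 1).factorial : ℝ) *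
      ∑ i ∈ Finset.range R,
        f (z + c i * h) / ∏ j ∈ (Finset.range R).erase i, (c i - c j)) ^ 2

/-- Unnormalized WENO weight `α_{R,i,h}`, with `r' = ⌈(R-1)/2⌉ = R/2` (ℕ-division). -/
noncomputable def wenoAlpha (R : ℕ) (c : ℕ → ℝ) (z : ℝ) (f : ℝ → ℝ) (s : ℕ) (ε : ℝ)
    (i : ℕ) (h : ℝ) : ℝ :=
  (1 / (((R / 2 : ℕ) : ℝ) + 1)) *
    (1 + (wenoD R c z f h) ^ s / ((wenoI R c z f i h) ^ s + ε))

/-- Normalized WENO weight `ω_{R,i,h}`. -/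
noncomputable def wenoOmega (R : ℕ) (c : ℕ → ℝ) (z : ℝ) (f : ℝ → ℝ) (s : ℕ) (ε : ℝ)
    (i : ℕ) (h : ℝ) : ℝ :=
  wenoAlpha R c z f s ε i h / ∑ j ∈ Finset.range (R / 2 + 1), wenoAlpha R c z f s ε j h

/-- Global average weight `ω_{R,h}`. -/
noncomputable def wenoOmegaG (R : ℕ) (c : ℕ → ℝ) (z : ℝ) (f : ℝ → ℝ) (s : ℕ) (ε : ℝ)
    (h : ℝ) : ℝ :=
  1 / (1 + (wenoD R c z f h) ^ s *
        ∑ i ∈ Finset.range (R / 2 + 1), 1 / ((wenoI R c z f i h) ^ s + ε))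

/-!
Write `D` and `I i` for the squared undivided difference and the smoothness indicators at step `h`.
An `R`-point divided difference annihilates polynomials of degree below `R - 1`, so Taylor's theorem
gives `D = O(h ^ (2 * (R - 1)))`. At a critical point of exact order `k`, the increment of `f` over
the `j`-th interval is, up to `o(h ^ (k + 1))`, a nonzero multiple of
`(c (j + 1) ^ (k + 1) - c j ^ (k + 1)) * h ^ (k + 1)`, which vanishes identically only if `k` is odd
and the interval is centred at `z`. Each substencil has an interval where this does not happen, so
`h ^ (2 * (k + 1)) = O(I i)` and hence `D = O(h ^ (2 * (R - 2 - k)) * I i)`. Finally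
`1 - ω ≤ ∑ i, D ^ s / (I i ^ s + ε)`, and the bound on `D` controls each term whatever the value
of `ε`.
-/

open Asymptotics Filter Finset Polynomial
open scoped Nat Topology

section Taylor

variable {E : Type*} [NormedAddCommGroup E] [NormedSpace ℝ E] {f : ℝ → E} {z : ℝ} {n : ℕ}

lemma taylor_isLittleO_of_contDiffAt (hf : ContDiffAt ℝ n f z) :
    (fun x ↦ f x - ∑ j ∈ range (n + 1), ((x - z) ^ j / j !) • iteratedDeriv j f z)
      =o[𝓝 z] fun x ↦ (x - z) ^ n := by
  obtain ⟨u, hu, hfu⟩ := hf.contDiffOn le_rfl (by simp)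
  obtain ⟨δ, hδ, hball⟩ := Metric.mem_nhds_iff.1 hu
  have hz : z ∈ Metric.ball z δ := Metric.mem_ball_self hδ
  have htaylor := taylor_isLittleO (convex_ball z δ) hz (hfu.mono hball)
  rw [Metric.isOpen_ball.nhdsWithin_eq hz] at htaylor
  refine htaylor.congr_left fun x ↦ ?_
  rw [taylor_within_apply]
  congr 1
  refine sum_congr rfl fun j hj ↦ ?_
  have hjn : (j : WithTop ℕ∞) ≤ n := by exact_mod_cast mem_range_succ_iff.1 hj
  rw [iteratedDerivWithin_eq_iteratedDeriv Metric.isOpen_ball.uniqueDiffOn (hf.of_le hjn) hz,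
    div_eq_inv_mul]

lemma taylor_isLittleO_comp_add_mul (hf : ContDiffAt ℝ n f z) (a : ℝ) :
    (fun h ↦ f (z + a * h) - ∑ j ∈ range (n + 1), ((a * h) ^ j / j !) • iteratedDeriv j f z)
      =o[𝓝 0] fun h ↦ h ^ n := by
  have hlim : Tendsto (fun h ↦ z + a * h) (𝓝 0) (𝓝 z) := by
    simpa using (by fun_prop : Continuous fun h ↦ z + a * h).tendsto 0
  have hscale : (fun h ↦ (a * h) ^ n) =O[𝓝 0] fun h ↦ h ^ n := by
    simpa only [mul_pow] using isBigO_const_mul_self (a ^ n) (fun h : ℝ ↦ h ^ n) (𝓝 0)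
  have hcomp := (taylor_isLittleO_of_contDiffAt hf).comp_tendsto hlim
  simp only [Function.comp_def, add_sub_cancel_left] at hcomp
  exact hcomp.trans_isBigO hscale

lemma exists_polynomial_taylor_isBigO {f : ℝ → ℝ} (hf : ContDiffAt ℝ n f z) :
    ∃ P : ℝ → ℝ[X], (∀ h, (P h).degree < n) ∧
      ∀ a, (fun h ↦ f (z + a * h) - (P h).eval a) =O[𝓝 0] fun h ↦ h ^ n := by
  refine ⟨fun h ↦ ∑ j ∈ range n, C (h ^ j / j ! * iteratedDeriv j f z) * X ^ j, fun h ↦ ?_,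
    fun a ↦ ?_⟩
  · refine (degree_lt_iff_coeff_zero _ _).2 fun m hm ↦ ?_
    simp only [finsetSum_coeff, coeff_C_mul_X_pow]
    exact sum_eq_zero fun j hj ↦ if_neg ((mem_range.1 hj).trans_le hm).ne'
  · have hlast := isBigO_const_mul_self (a ^ n / n ! * iteratedDeriv n f z)
      (fun h : ℝ ↦ h ^ n) (𝓝 0)
    refine ((taylor_isLittleO_comp_add_mul hf a).isBigO.add hlast).congr_left fun h ↦ ?_
    have heval : (∑ j ∈ range n, C (h ^ j / j ! * iteratedDeriv j f z) * X ^ j).eval a =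
        ∑ j ∈ range n, (a * h) ^ j / j ! * iteratedDeriv j f z := by
      simp only [eval_finsetSum, eval_mul, eval_C, eval_pow, eval_X]
      exact sum_congr rfl fun j _ ↦ by ring
    rw [heval, sum_range_succ]
    simp only [smul_eq_mul]
    ring

lemma increment_sub_leadingTerm_isLittleO {k : ℕ} (hf : ContDiffAt ℝ (k + 1 : ℕ) f z)
    (hcrit : ∀ j, 1 ≤ j → j ≤ k → iteratedDeriv j f z = 0) (a b : ℝ) :
    (fun h ↦ f (z + b * h) - f (z + a * h) -
      h ^ (k + 1) • ((b ^ (k + 1) - a ^ (k + 1)) / (k + 1)!) • iteratedDeriv (k + 1) f z)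
      =o[𝓝 0] fun h ↦ h ^ (k + 1) := by
  have htaylor (x h : ℝ) :
      ∑ j ∈ range (k + 1 + 1), ((x * h) ^ j / j !) • iteratedDeriv j f z =
        f z + ((x * h) ^ (k + 1) / (k + 1)!) • iteratedDeriv (k + 1) f z := by
    rw [sum_range_succ, sum_range_succ', sum_eq_zero fun j hj ↦ ?_]
    · simp
    · rw [hcrit (j + 1) (by lia) (mem_range.1 hj), smul_zero]
  have hdiff := (taylor_isLittleO_comp_add_mul hf b).sub (taylor_isLittleO_comp_add_mul hf a)
  simp only [htaylor] at hdiff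
  exact hdiff.congr_left fun h ↦ by simp only [mul_pow]; module

lemma pow_isBigO_increment {k : ℕ} (hf : ContDiffAt ℝ (k + 1 : ℕ) f z)
    (hcrit : ∀ j, 1 ≤ j → j ≤ k → iteratedDeriv j f z = 0)
    (hk1 : iteratedDeriv (k + 1) f z ≠ 0) {a b : ℝ} (hab : a ^ (k + 1) ≠ b ^ (k + 1)) :
    (fun h ↦ h ^ (k + 1)) =O[𝓝 0] fun h ↦ f (z + b * h) - f (z + a * h) := by
  set v := ((b ^ (k + 1) - a ^ (k + 1)) / (k + 1)!) • iteratedDeriv (k + 1) f z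
  have hv : v ≠ 0 :=
    smul_ne_zero (div_ne_zero (sub_ne_zero.2 hab.symm) (by positivity)) hk1
  have hleading : (fun h : ℝ ↦ h ^ (k + 1)) =O[𝓝 0] fun h ↦ h ^ (k + 1) • v := by
    simpa only [smul_eq_mul, mul_one] using
      (isBigO_refl (fun h : ℝ ↦ h ^ (k + 1)) (𝓝 0)).smul (isBigO_const_const (1 : ℝ) hv (𝓝 0))
  have hremainder := (increment_sub_leadingTerm_isLittleO hf hcrit a b).trans_isBigO hleading
  exact hleading.trans (hremainder.right_isBigO_add.congr_right fun h ↦ sub_add_cancel _ _)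

end Taylor

section DividedDifference

/-- The divided difference of the values `y i` at the nodes `c i`, `i ∈ s`, in its symmetric
(Lagrange) form; for distinct nodes it is the coefficient of `X ^ (#s - 1)` in the interpolation
polynomial. -/
def dividedDifference {ι K : Type*} [DecidableEq ι] [Field K] (s : Finset ι) (c y : ι → K) : K :=
  ∑ i ∈ s, y i / ∏ j ∈ s.erase i, (c i - c j)

variable {ι K : Type*} [DecidableEq ι] [Field K] {s : Finset ι}

lemma dividedDifference_sub (c y₁ y₂ : ι → K) :
    dividedDifference s c (y₁ - y₂) = dividedDifference s c y₁ - dividedDifference s c y₂ := by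
  simp only [dividedDifference, Pi.sub_apply, sub_div, sum_sub_distrib]

lemma dividedDifference_eval_eq_zero {c : ι → K} (hc : Set.InjOn c s) {p : K[X]}
    (hp : p.degree < (#s - 1 : ℕ)) : dividedDifference s c (fun i ↦ p.eval (c i)) = 0 := by
  have hcard : p.degree < #s := hp.trans_le (by exact_mod_cast Nat.sub_le _ 1)
  exact (Lagrange.coeff_eq_sum hc hcard).symm.trans (coeff_eq_zero_of_degree_lt hp)

lemma dividedDifference_isBigO {c : ι → ℝ} (hc : Set.InjOn c s) {f : ℝ → ℝ} {z : ℝ}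
    (hf : ContDiffAt ℝ (#s - 1 : ℕ) f z) :
    (fun h ↦ dividedDifference s c fun i ↦ f (z + c i * h)) =O[𝓝 0] fun h ↦ h ^ (#s - 1) := by
  obtain ⟨P, hdegree, hP⟩ := exists_polynomial_taylor_isBigO hf
  have hremainder (h : ℝ) : dividedDifference s c (fun i ↦ f (z + c i * h)) =
      dividedDifference s c ((fun i ↦ f (z + c i * h)) - fun i ↦ (P h).eval (c i)) := by
    rw [dividedDifference_sub, dividedDifference_eval_eq_zero hc (hdegree h), sub_zero]
  refine IsBigO.congr_left ?_ fun h ↦ (hremainder h).symm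
  simp only [dividedDifference, Pi.sub_apply, div_eq_inv_mul]
  exact IsBigO.fun_sum fun i _ ↦ (hP (c i)).const_mul_left _

end DividedDifference

lemma pow_succ_ne_pow_succ_of_even_or_add_ne_zero {K : Type*} [Ring K] [LinearOrder K]
    [IsStrictOrderedRing K] {a b : K} (hab : a ≠ b) {k : ℕ} (h : Even k ∨ a + b ≠ 0) :
    a ^ (k + 1) ≠ b ^ (k + 1) := by
  intro hpow
  rcases pow_eq_pow_iff_cases.1 hpow with hzero | heq | ⟨hneg, heven⟩
  · exact k.succ_ne_zero hzero
  · exact hab heq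
  · exact h.elim (Nat.even_add_one.1 heven) fun hne ↦ hne (by rw [hneg, neg_add_cancel])

section WENO

variable {R : ℕ} {c : ℕ → ℝ} {z : ℝ} {f : ℝ → ℝ}

lemma wenoD_nonneg (h : ℝ) : 0 ≤ wenoD R c z f h := sq_nonneg _

lemma wenoI_nonneg (i : ℕ) (h : ℝ) : 0 ≤ wenoI R c z f i h := sum_nonneg fun _ _ ↦ sq_nonneg _

lemma sq_slope_le_wenoI {i j : ℕ} (hj : j ∈ Ico i (i + (R - 1) / 2)) (h : ℝ) :
    ((f (z + c (j + 1) * h) - f (z + c j * h)) / (c (j + 1) - c j)) ^ 2 ≤ wenoI R c z f i h :=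
  single_le_sum (f := fun j ↦ ((f (z + c (j + 1) * h) - f (z + c j * h)) / (c (j + 1) - c j)) ^ 2)
    (fun _ _ ↦ sq_nonneg _) hj

lemma wenoD_isBigO (hc : Set.InjOn c (range R)) (hf : ContDiffAt ℝ (R - 1 : ℕ) f z) :
    wenoD R c z f =O[𝓝 0] fun h ↦ h ^ (2 * (R - 1)) := by
  have hdd : (fun h ↦ dividedDifference (range R) c fun i ↦ f (z + c i * h)) =O[𝓝 0]
      fun h ↦ h ^ (R - 1) := by
    simpa only [card_range] using dividedDifference_isBigO hc (by rwa [card_range])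
  simp only [mul_comm 2 (R - 1), pow_mul]
  exact (hdd.const_mul_left ((R - 1)! : ℝ)).pow 2

lemma exists_mem_Ico_even_or_add_ne_zero (hR : 3 ≤ R) (hc : Set.InjOn c (range R)) {k : ℕ}
    (hexc : 5 ≤ R ∨ Even k ∨ ∀ j, j ≤ R - 2 → c j + c (j + 1) ≠ 0) {i : ℕ}
    (hi : i ∈ range (R / 2 + 1)) :
    ∃ j ∈ Ico i (i + (R - 1) / 2), Even k ∨ c j + c (j + 1) ≠ 0 := by
  have hi' := mem_range.1 hi
  have hmem : i ∈ Ico i (i + (R - 1) / 2) := mem_Ico.2 (by lia)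
  rcases hexc with hR5 | heven | hne
  · by_cases hcentred : c i + c (i + 1) = 0
    · -- Two consecutive intervals cannot both be centred at `z`.
      refine ⟨i + 1, mem_Ico.2 (by lia), Or.inr fun hcentred' ↦ ?_⟩
      have hnodes : c i = c (i + 1 + 1) := by linarith
      have hindices : i = i + 1 + 1 := hc (mem_range.2 (by lia)) (mem_range.2 (by lia)) hnodes
      lia
    · exact ⟨i, hmem, Or.inr hcentred⟩
  · exact ⟨i, hmem, Or.inl heven⟩
  · exact ⟨i, hmem, Or.inr (hne i (by lia))⟩

lemma pow_isBigO_wenoI (hR : 3 ≤ R) (hc : Set.InjOn c (range R)) {k : ℕ}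
    (hf : ContDiffAt ℝ (k + 1 : ℕ) f z)
    (hcrit : ∀ j, 1 ≤ j → j ≤ k → iteratedDeriv j f z = 0)
    (hk1 : iteratedDeriv (k + 1) f z ≠ 0)
    (hexc : 5 ≤ R ∨ Even k ∨ ∀ j, j ≤ R - 2 → c j + c (j + 1) ≠ 0) {i : ℕ}
    (hi : i ∈ range (R / 2 + 1)) :
    (fun h ↦ h ^ (2 * (k + 1))) =O[𝓝 0] wenoI R c z f i := by
  obtain ⟨j, hj, hjk⟩ := exists_mem_Ico_even_or_add_ne_zero hR hc hexc hi
  have hjR : j + 1 < R := by rw [mem_Ico] at hj; rw [mem_range] at hi; lia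
  have hne : c j ≠ c (j + 1) :=
    hc.ne (mem_range.2 (by lia)) (mem_range.2 hjR) j.succ_ne_self.symm
  have hpow := pow_succ_ne_pow_succ_of_even_or_add_ne_zero hne hjk
  have hslope : (fun h ↦ h ^ (k + 1)) =O[𝓝 0]
      fun h ↦ (f (z + c (j + 1) * h) - f (z + c j * h)) / (c (j + 1) - c j) := by
    simp only [div_eq_inv_mul]
    exact (isBigO_const_mul_right_iff (inv_ne_zero (sub_ne_zero.2 hne.symm))).2
      (pow_isBigO_increment hf hcrit hk1 hpow)
  have hsq := hslope.pow 2
  simp only [← pow_mul, mul_comm (k + 1) 2] at hsq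
  refine hsq.trans (IsBigO.of_norm_le fun h ↦ ?_)
  rw [Real.norm_of_nonneg (sq_nonneg _)]
  exact sq_slope_le_wenoI hj h

lemma wenoD_isBigO_mul_wenoI (hR : 3 ≤ R) (hc : Set.InjOn c (range R)) {k : ℕ} (hk : k ≤ R - 2)
    (hf : ContDiffAt ℝ (R - 1 : ℕ) f z)
    (hcrit : ∀ j, 1 ≤ j → j ≤ k → iteratedDeriv j f z = 0)
    (hk1 : iteratedDeriv (k + 1) f z ≠ 0)
    (hexc : 5 ≤ R ∨ Even k ∨ ∀ j, j ≤ R - 2 → c j + c (j + 1) ≠ 0) {i : ℕ}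
    (hi : i ∈ range (R / 2 + 1)) :
    wenoD R c z f =O[𝓝 0] fun h ↦ h ^ (2 * (R - 2 - k)) * wenoI R c z f i h := by
  have hfk : ContDiffAt ℝ (k + 1 : ℕ) f z := hf.of_le (by exact_mod_cast (by lia))
  have hexp : 2 * (R - 1) = 2 * (R - 2 - k) + 2 * (k + 1) := by lia
  refine (wenoD_isBigO hc hf).trans ?_
  simp only [hexp, pow_add _ (2 * (R - 2 - k))]
  exact (isBigO_refl _ _).mul (pow_isBigO_wenoI hR hc hfk hcrit hk1 hexc hi)

lemma exists_forall_wenoD_le_mul_wenoI (hR : 3 ≤ R) (hc : Set.InjOn c (range R)) {k : ℕ}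
    (hk : k ≤ R - 2) (hf : ContDiffAt ℝ (R - 1 : ℕ) f z)
    (hcrit : ∀ j, 1 ≤ j → j ≤ k → iteratedDeriv j f z = 0)
    (hk1 : iteratedDeriv (k + 1) f z ≠ 0)
    (hexc : 5 ≤ R ∨ Even k ∨ ∀ j, j ≤ R - 2 → c j + c (j + 1) ≠ 0) :
    ∃ B > 0, ∀ᶠ h in 𝓝 0, ∀ i ∈ range (R / 2 + 1),
      wenoD R c z f h ≤ B * h ^ (2 * (R - 2 - k)) * wenoI R c z f i h := by
  have hbound : ∀ᶠ B in atTop, ∀ i ∈ range (R / 2 + 1), ∀ᶠ h in 𝓝 0,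
      ‖wenoD R c z f h‖ ≤ B * ‖h ^ (2 * (R - 2 - k)) * wenoI R c z f i h‖ :=
    (eventually_all_finset _).2 fun i hi ↦
      isBigO_iff_eventually.1 (wenoD_isBigO_mul_wenoI hR hc hk hf hcrit hk1 hexc hi)
  obtain ⟨B, hB, hBpos⟩ := (hbound.and (eventually_gt_atTop 0)).exists
  refine ⟨B, hBpos, ((eventually_all_finset _).2 hB).mono fun h hh i hi ↦ ?_⟩
  have hnonneg : 0 ≤ h ^ (2 * (R - 2 - k)) * wenoI R c z f i h :=
    mul_nonneg ((even_two_mul _).pow_nonneg h) (wenoI_nonneg i h)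
  simpa only [Real.norm_of_nonneg (wenoD_nonneg h), Real.norm_of_nonneg hnonneg, mul_assoc]
    using hh i hi

section Weight

variable {s : ℕ} {ε h : ℝ}

variable (R c z f s h) in
lemma wenoD_pow_mul_sum_nonneg (hε : 0 < ε) :
    0 ≤ wenoD R c z f h ^ s * ∑ i ∈ range (R / 2 + 1), 1 / (wenoI R c z f i h ^ s + ε) :=
  mul_nonneg (pow_nonneg (wenoD_nonneg h) s) <| sum_nonneg fun i _ ↦
    one_div_nonneg.2 (add_nonneg (pow_nonneg (wenoI_nonneg i h) s) hε.le)

lemma wenoOmegaG_mem_Icc (hε : 0 < ε) : wenoOmegaG R c z f s ε h ∈ Set.Icc 0 1 := by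
  have hnonneg := wenoD_pow_mul_sum_nonneg R c z f s h hε
  exact ⟨one_div_nonneg.2 (by linarith), div_le_one_of_le₀ (by linarith) (by linarith)⟩

lemma one_sub_wenoOmegaG_le_sum (hε : 0 < ε) :
    1 - wenoOmegaG R c z f s ε h ≤
      ∑ i ∈ range (R / 2 + 1), wenoD R c z f h ^ s / (wenoI R c z f i h ^ s + ε) := by
  have hnonneg := wenoD_pow_mul_sum_nonneg R c z f s h hε
  simp only [div_eq_mul_one_div (wenoD R c z f h ^ s), ← mul_sum]
  rw [wenoOmegaG, sub_le_comm, le_div_iff₀ (by linarith)]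
  nlinarith

lemma one_sub_wenoOmegaG_le_of_forall_wenoD_le (hε : 0 < ε) {B : ℝ} (hB : 0 ≤ B)
    (hD : ∀ i ∈ range (R / 2 + 1), wenoD R c z f h ≤ B * wenoI R c z f i h) :
    1 - wenoOmegaG R c z f s ε h ≤ (R / 2 + 1 : ℕ) * B ^ s := by
  have hterm (i : ℕ) (hi : i ∈ range (R / 2 + 1)) :
      wenoD R c z f h ^ s / (wenoI R c z f i h ^ s + ε) ≤ B ^ s := by
    have hIs : 0 ≤ wenoI R c z f i h ^ s := pow_nonneg (wenoI_nonneg i h) s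
    rw [div_le_iff₀ (by linarith)]
    calc wenoD R c z f h ^ s
        ≤ (B * wenoI R c z f i h) ^ s := pow_le_pow_left₀ (wenoD_nonneg h) (hD i hi) s
      _ = B ^ s * wenoI R c z f i h ^ s := mul_pow ..
      _ ≤ B ^ s * (wenoI R c z f i h ^ s + ε) := by gcongr; linarith
  calc 1 - wenoOmegaG R c z f s ε h
      ≤ ∑ i ∈ range (R / 2 + 1), wenoD R c z f h ^ s / (wenoI R c z f i h ^ s + ε) :=
        one_sub_wenoOmegaG_le_sum hε
    _ ≤ (R / 2 + 1 : ℕ) * B ^ s := by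
        simpa only [card_range, nsmul_eq_mul] using sum_le_card_nsmul _ _ _ hterm

end Weight

end WENO

theorem stmt_8_general (R : ℕ) (hR : 3 ≤ R) (c : ℕ → ℝ) (hc : Set.InjOn c (range R)) (z : ℝ)
    (f : ℝ → ℝ) (hf : ContDiffAt ℝ (R - 1 : ℕ) f z) (k : ℕ) (hk : k ≤ R - 2)
    (hcrit : ∀ j, 1 ≤ j → j ≤ k → iteratedDeriv j f z = 0)
    (hk1 : iteratedDeriv (k + 1) f z ≠ 0)
    (hexc : 5 ≤ R ∨ Even k ∨ ∀ j, j ≤ R - 2 → c j + c (j + 1) ≠ 0) (s : ℕ) :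
    (∀ ε > 0, ∀ h, wenoOmegaG R c z f s ε h ∈ Set.Icc 0 1) ∧
    ∃ C > 0, ∃ h₀ > 0, ∀ ε > 0, ∀ h, |h| < h₀ →
      1 - wenoOmegaG R c z f s ε h ≤ C * h ^ (2 * s * (R - 2 - k)) := by
  refine ⟨fun ε hε h ↦ wenoOmegaG_mem_Icc hε, ?_⟩
  obtain ⟨B, hB, hev⟩ := exists_forall_wenoD_le_mul_wenoI hR hc hk hf hcrit hk1 hexc
  obtain ⟨h₀, hh₀, hD⟩ := Metric.eventually_nhds_iff.1 hev
  refine ⟨(R / 2 + 1 : ℕ) * B ^ s, by positivity, h₀, hh₀, fun ε hε h hh ↦ ?_⟩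
  have hBh : 0 ≤ B * h ^ (2 * (R - 2 - k)) := mul_nonneg hB.le ((even_two_mul _).pow_nonneg h)
  calc 1 - wenoOmegaG R c z f s ε h
      ≤ (R / 2 + 1 : ℕ) * (B * h ^ (2 * (R - 2 - k))) ^ s :=
        one_sub_wenoOmegaG_le_of_forall_wenoD_le hε hBh (hD (by rwa [Real.dist_0_eq_abs]))
    _ = (R / 2 + 1 : ℕ) * B ^ s * h ^ (2 * s * (R - 2 - k)) := by ring

/-- **Global weight in the smooth case.** Under the smooth critical-point setup, the global
weight `ω_{R,h}` lies in `[0,1]` and `1 - ω_{R,h} = O(h^{2s(R-2-k)})`, uniformly in `ε > 0`. -/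
theorem stmt_8 (R : ℕ) (hR : 3 ≤ R) (c : ℕ → ℝ)
    (hc : ∀ i j : ℕ, i < j → j < R → c i < c j)
    (z : ℝ) (f : ℝ → ℝ) (U : Set ℝ) (hU : U ∈ nhds z)
    (hf : ContDiffOn ℝ (⊤ : ℕ∞) f U)
    (k : ℕ) (hk : k ≤ R - 2)
    (hcrit : ∀ j : ℕ, 1 ≤ j → j ≤ k → iteratedDeriv j f z = 0)
    (hk1 : iteratedDeriv (k + 1) f z ≠ 0)
    (hexc : 5 ≤ R ∨ Even k ∨ ∀ j : ℕ, j ≤ R - 2 → c j + c (j + 1) ≠ 0)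
    (s : ℕ) (hs : 1 ≤ s) :
    (∀ ε > (0 : ℝ), ∀ h : ℝ, 0 < h →
        0 ≤ wenoOmegaG R c z f s ε h ∧ wenoOmegaG R c z f s ε h ≤ 1) ∧
    ∃ C > (0 : ℝ), ∃ h₀ > (0 : ℝ), ∀ ε > (0 : ℝ), ∀ h : ℝ, 0 < h → h < h₀ →
      0 ≤ 1 - wenoOmegaG R c z f s ε h ∧
        1 - wenoOmegaG R c z f s ε h ≤ C * h ^ (2 * s * (R - 2 - k)) := by
  have hinj : Set.InjOn c (range R) :=
    StrictMonoOn.injOn fun i _ j hj hij ↦ hc i j hij (by simpa using hj)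
  obtain ⟨hω, C, hC, h₀, hh₀, hle⟩ := stmt_8_general R hR c hinj z f
    (contDiffAt_infty.1 (hf.contDiffAt hU) (R - 1)) k hk hcrit hk1 hexc s
  exact ⟨fun ε hε h _ ↦ hω ε hε h, C, hC, h₀, hh₀, fun ε hε h hh hlt ↦
    ⟨sub_nonneg.2 (hω ε hε h).2, hle ε hε h (by rwa [abs_of_pos hh])⟩⟩
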